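/- arXiv:2109.12647 — 3 statements merged into one kernel-verified Lean document; each statement's English description precedes it below -/
import Mathlib

section
/- Let d ≥ 1 and let S be a compact connected subset of ℝ^d. Then every point of the convex hull of S can be written as a convex combination of at most d points of S; i.e., for every x in conv(S) there exist points s_1,…,s_d ∈ S and nonnegative reals λ_1,…,λ_d with λ_1+⋯+λ_d = 1 and x = λ_1 s_1 + ⋯ + λ_d s_d. -/
/-- Pad a convex combination over a small index type to one over `Fin d`. -/
theorem fe_pad {d : ℕ} {S : Set (Fin d → ℝ)} {x : Fin d → ℝ} (hne : S.Nonempty)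
    {ι : Type*} [Fintype ι] (hc : Fintype.card ι ≤ d) (z : ι → Fin d → ℝ) (w : ι → ℝ)
    (hz : ∀ i, z i ∈ S) (hw : ∀ i, 0 ≤ w i) (h1 : ∑ i, w i = 1) (hx : ∑ i, w i • z i = x) :
    ∃ (s : Fin d → (Fin d → ℝ)) (l : Fin d → ℝ),
      (∀ i, s i ∈ S) ∧ (∀ i, 0 ≤ l i) ∧ (∑ i, l i = 1) ∧
      x = ∑ i, l i • s i := by
  obtain ⟨p, hp⟩ := hne
  obtain ⟨e⟩ := Function.Embedding.nonempty_of_card_le (α := ι) (β := Fin d) (by simpa using hc)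
  have hinj := e.injective
  refine ⟨Function.extend e z (fun _ => p), Function.extend e w (fun _ => 0), ?_, ?_, ?_, ?_⟩
  · intro i
    by_cases h : ∃ a, e a = i
    · obtain ⟨a, rfl⟩ := h
      rw [hinj.extend_apply]; exact hz a
    · rw [Function.extend_apply' _ _ _ h]; exact hp
  · intro i
    by_cases h : ∃ a, e a = i
    · obtain ⟨a, rfl⟩ := h
      rw [hinj.extend_apply]; exact hw a
    · rw [Function.extend_apply' _ _ _ h]
  · rw [← h1]
    symm
    apply Fintype.sum_of_injective e hinj
    · intro i h
      exact Function.extend_apply' _ _ _ h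
    · intro i
      rw [hinj.extend_apply]
  · rw [← hx]
    apply Fintype.sum_of_injective e hinj
    · intro i h
      rw [Function.extend_apply' w _ _ h, zero_smul]
    · intro i
      rw [hinj.extend_apply, hinj.extend_apply]

/-- **Fenchel–Eggleston strengthening of Carathéodory's theorem.**
If `S` is a compact connected subset of `ℝ^d` (with `d ≥ 1`), then every point of the
convex hull of `S` is a convex combination of at most `d` points of `S`. -/
theorem fenchel_eggleston (d : ℕ) (hd : 1 ≤ d) (S : Set (Fin d → ℝ))
    (hScompact : IsCompact S) (hSconn : IsConnected S)
    (x : Fin d → ℝ) (hx : x ∈ convexHull ℝ S) :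
    ∃ (s : Fin d → (Fin d → ℝ)) (l : Fin d → ℝ),
      (∀ i, s i ∈ S) ∧ (∀ i, 0 ≤ l i) ∧ (∑ i, l i = 1) ∧
      x = ∑ i, l i • s i := by
  classical
  obtain ⟨ι, hι, z, w, hzS, hai, hw, hw1, hwx⟩ := eq_pos_convex_span_of_mem_convexHull hx
  have hzmem : ∀ i, z i ∈ S := fun i => hzS ⟨i, rfl⟩
  by_cases hc : Fintype.card ι ≤ d
  · exact fe_pad hSconn.nonempty hc z w hzmem (fun i => (hw i).le) hw1 hwx
  have hcard : Fintype.card ι = d + 1 := by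
    have h := hai.card_le_finrank_succ
    have h2 := Submodule.finrank_le (vectorSpan ℝ (Set.range z))
    simp only [Module.finrank_fin_fun] at h2
    omega
  have htop : affineSpan ℝ (Set.range z) = ⊤ := by
    rw [hai.affineSpan_eq_top_iff_card_eq_finrank_add_one, hcard, Module.finrank_fin_fun]
  let b : AffineBasis ι ℝ (Fin d → ℝ) := ⟨z, hai, htop⟩
  have hbz : ∀ i, b i = z i := fun _ => rfl
  let F : ι → Set (Fin d → ℝ) := fun i => {y | ∀ k, b.coord k y / w k ≤ b.coord i y / w i}
  have hcont : ∀ i, Continuous (fun y => b.coord i y / w i) := fun i =>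
    ((b.coord i).continuous_of_finiteDimensional).div_const _
  have hF : ∀ i, IsClosed (F i) := by
    intro i
    have : F i = ⋂ k, {y | b.coord k y / w k ≤ b.coord i y / w i} := by
      ext y; simp [F]
    rw [this]
    exact isClosed_iInter fun k => isClosed_le (hcont k) (hcont i)
  have hzF : ∀ i, z i ∈ F i := by
    intro i k
    rw [← hbz i, b.coord_apply, b.coord_apply]
    by_cases hk : k = i
    · subst hk; simp
    · simp [hk, (hw i).le]
  have hnt : Nontrivial ι := Fintype.one_lt_card_iff_nontrivial.1 (by omega)
  obtain ⟨i, i₁, hii⟩ := exists_pair_ne ι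
  have hFU : IsClosed (⋃ j : {j // j ≠ i}, F j) := isClosed_iUnion_of_finite fun j => hF j
  obtain ⟨y, hyS, hyi, hyU⟩ := isPreconnected_closed_iff.1 hSconn.isPreconnected (F i)
    (⋃ j : {j // j ≠ i}, F j) (hF i) hFU (by
      intro y _
      obtain ⟨j, hj⟩ := Finite.exists_max (fun k => b.coord k y / w k)
      by_cases h : j = i
      · subst h; exact Or.inl hj
      · exact Or.inr (Set.mem_iUnion.2 ⟨⟨j, h⟩, hj⟩))
    ⟨z i, hzmem i, hzF i⟩ ⟨z i₁, hzmem i₁, Set.mem_iUnion.2 ⟨⟨i₁, hii.symm⟩, hzF i₁⟩⟩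
  obtain ⟨⟨j, hji⟩, hyj⟩ := Set.mem_iUnion.1 hyU
  have hsum := b.sum_coord_apply_eq_one y
  have hlin := b.linear_combination_coord_eq_self y
  simp only [hbz] at hlin
  set c : ι → ℝ := fun k => b.coord k y with hcdef
  change ∑ k, c k = 1 at hsum
  change ∑ k, c k • z k = y at hlin
  have hi : ∀ k, c k / w k ≤ c i / w i := hyi
  have hj : c j / w j = c i / w i := le_antisymm (hyi j) (hyj i)
  have hpos : 0 < c i / w i := by
    by_contra hneg
    have : ∑ k, c k ≤ 0 := Finset.sum_nonpos fun k _ => by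
      have h := (hi k).trans (not_lt.1 hneg)
      rw [div_le_iff₀ (hw k)] at h
      simpa using h
    linarith
  obtain ⟨r, hr⟩ : ∃ r, r = c i / w i := ⟨_, rfl⟩
  rw [← hr] at hpos hj hi
  obtain ⟨a, ha⟩ : ∃ a, a = r⁻¹ := ⟨_, rfl⟩
  have hapos : 0 < a := ha ▸ inv_pos.2 hpos
  have har : a * r = 1 := by rw [ha]; exact inv_mul_cancel₀ hpos.ne'
  have hm : ∀ k, 0 ≤ w k - a * c k := by
    intro k
    have h := hi k
    rw [div_le_iff₀ (hw k)] at h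
    have h2 := mul_le_mul_of_nonneg_left h hapos.le
    rw [← mul_assoc, har] at h2
    linarith
  have hmeq : ∀ k, c k / w k = r → w k - a * c k = 0 := by
    intro k h
    rw [div_eq_iff (hw k).ne'] at h
    rw [h, ← mul_assoc, har]; ring
  have hmi := hmeq i hr.symm
  have hmj := hmeq j hj
  let m : ι → ℝ := fun k => (w k - a * c k) + if k = i then a else 0
  let s : ι → Fin d → ℝ := fun k => if k = i then y else z k
  have hmj0 : m j = 0 := by simp [m, hmj, hji]
  have hms : ∀ k, m k • s k = (w k • z k - a • (c k • z k)) + if k = i then a • y else 0 := by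
    intro k
    by_cases hk : k = i
    · subst hk
      have : w k • z k - a • (c k • z k) = 0 := by
        rw [smul_smul, ← sub_smul, hmi, zero_smul]
      simp [m, s, hmi, this]
    · simp [m, s, hk, sub_smul, smul_smul]
  have hm1 : ∑ k, m k = 1 := by
    simp [m, Finset.sum_add_distrib, Finset.sum_sub_distrib, ← Finset.mul_sum, hsum, hw1]
  have hmx : ∑ k, m k • s k = x := by
    simp only [hms, Finset.sum_add_distrib, Finset.sum_sub_distrib, ← Finset.smul_sum, hlin, hwx]
    simp
  refine fe_pad (ι := {k // k ≠ j}) hSconn.nonempty ?_ (fun k => s k) (fun k => m k) ?_ ?_ ?_ ?_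
  · rw [Fintype.card_subtype_compl, hcard]; simp
  · intro k
    by_cases hk : (k : ι) = i
    · simpa [s, hk] using hyS
    · simpa [s, hk] using hzmem k
  · intro k
    have := hm k
    simp only [m]
    split_ifs <;> linarith
  · rw [← hm1, Fintype.sum_eq_add_sum_subtype_ne m j, hmj0, zero_add]
  · rw [← hmx, Fintype.sum_eq_add_sum_subtype_ne (fun k => m k • s k) j, hmj0, zero_smul, zero_add]
end

section
/- Let p be a pmf on a finite set 𝒳, let δ > 0, and set c = Σ_{a ∈ 𝒳, p(a)>0} |log₂ p(a)|. Then for every n ≥ 1 the cardinality of the δ-typical set satisfies |T_δ^{(n)}(p)| ≤ 2^{n(H(p)+cδ)}. -/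
open Finset

/-- `count x a` is the number of occurrences `N(a|x^n)` of the symbol `a`
in the sequence `x = (x_1, …, x_n)`. -/
def count {𝒳 : Type} [DecidableEq 𝒳] {n : ℕ} (x : Fin n → 𝒳) (a : 𝒳) : ℕ :=
  (Finset.univ.filter fun i => x i = a).card

/-- `IsTypical p δ x` asserts that the sequence `x` belongs to the δ-typical set
`T_δ^{(n)}(p)`. -/
def IsTypical {𝒳 : Type} [DecidableEq 𝒳] {n : ℕ} (p : 𝒳 → ℝ) (δ : ℝ)
    (x : Fin n → 𝒳) : Prop :=
  ∀ a : 𝒳, (0 < p a → |(count x a : ℝ) / n - p a| ≤ δ) ∧ (p a = 0 → count x a = 0)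

noncomputable instance {𝒳 : Type} [Fintype 𝒳] [DecidableEq 𝒳] {n : ℕ} (p : 𝒳 → ℝ) (δ : ℝ)
    (x : Fin n → 𝒳) : Decidable (IsTypical p δ x) := by
  unfold IsTypical; infer_instance

/-- The Shannon entropy `H(p) = −Σ_{a : p(a)>0} p(a) log₂ p(a)` of a pmf on a finite set. -/
noncomputable def shannonEnt {𝒳 : Type} [Fintype 𝒳] (p : 𝒳 → ℝ) : ℝ :=
  -∑ a, if 0 < p a then p a * Real.logb 2 (p a) else 0

/-- **Cardinality bound on the typical set.** For every pmf `p`, `δ > 0`,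
`c = Σ_{a : p(a)>0} |log₂ p(a)|`, and every `n ≥ 1`,
`|T_δ^{(n)}(p)| ≤ 2^{n(H(p)+cδ)}`. -/
theorem typical_set_cardinality_bound {𝒳 : Type} [Fintype 𝒳] [DecidableEq 𝒳]
    (p : 𝒳 → ℝ) (hp0 : ∀ a, 0 ≤ p a) (hp1 : ∑ a, p a = 1)
    (δ : ℝ) (hδ : 0 < δ)
    (c : ℝ) (hc : c = ∑ a, if 0 < p a then |Real.logb 2 (p a)| else 0)
    (n : ℕ) (hn : 1 ≤ n) :
    ((Finset.univ.filter fun x : Fin n → 𝒳 => IsTypical p δ x).card : ℝ)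
      ≤ (2 : ℝ) ^ ((n : ℝ) * (shannonEnt p + c * δ)) := by
  have hn0 : (0 : ℝ) < n := by exact_mod_cast hn
  have key : ∀ x : Fin n → 𝒳, IsTypical p δ x →
      (2 : ℝ) ^ (-((n : ℝ) * (shannonEnt p + c * δ))) ≤ ∏ i, p (x i) := by
    intro x hx
    have hpos : ∀ i, 0 < p (x i) := by
      intro i
      refine lt_of_le_of_ne (hp0 _) (fun h => ?_)
      have h0 := (hx (x i)).2 h.symm
      rw [count, Finset.card_eq_zero] at h0
      have hi : i ∈ Finset.univ.filter (fun j => x j = x i) := by simp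
      rw [h0] at hi
      simp at hi
    have hprod : ∏ i, p (x i) = (2 : ℝ) ^ (∑ i, Real.logb 2 (p (x i))) := by
      rw [Real.rpow_sum_of_pos (by norm_num)]
      refine Finset.prod_congr rfl (fun i _ => ?_)
      rw [Real.rpow_logb (by norm_num) (by norm_num) (hpos i)]
    have hsum : ∑ i, Real.logb 2 (p (x i)) = ∑ a, (count x a : ℝ) * Real.logb 2 (p a) := by
      rw [← Finset.sum_fiberwise (s := Finset.univ) (g := x)]
      refine Finset.sum_congr rfl (fun a _ => ?_)
      rw [Finset.sum_congr rfl (g := fun _ => Real.logb 2 (p a))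
        (fun i hi => by rw [(Finset.mem_filter.mp hi).2])]
      rw [Finset.sum_const, nsmul_eq_mul, count]
    rw [hprod, hsum]
    refine Real.rpow_le_rpow_of_exponent_le (by norm_num) ?_
    have hlhs : -((n : ℝ) * (shannonEnt p + c * δ)) =
        ∑ a, (n : ℝ) * ((if 0 < p a then p a * Real.logb 2 (p a) else 0)
          - (if 0 < p a then |Real.logb 2 (p a)| else 0) * δ) := by
      rw [← Finset.mul_sum, Finset.sum_sub_distrib, ← Finset.sum_mul, ← hc, shannonEnt]
      ring
    rw [hlhs]
    refine Finset.sum_le_sum (fun a _ => ?_)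
    by_cases ha : 0 < p a
    · simp only [ha, if_true]
      have h1 := (hx a).1 ha
      have h2 : |((count x a : ℝ) / n - p a) * Real.logb 2 (p a)|
          ≤ δ * |Real.logb 2 (p a)| := by
        rw [abs_mul]
        exact mul_le_mul_of_nonneg_right h1 (abs_nonneg _)
      have h3 := (abs_le.mp h2).1
      have h4 : (count x a : ℝ) * Real.logb 2 (p a)
          = n * ((count x a : ℝ) / n * Real.logb 2 (p a)) := by
        field_simp
      rw [h4]
      refine mul_le_mul_of_nonneg_left ?_ hn0.le
      linarith
    · have h0 : p a = 0 := le_antisymm (not_lt.mp ha) (hp0 a)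
      simp [h0]
  have htot : ∑ x : Fin n → 𝒳, ∏ i, p (x i) = 1 := by
    have h := Finset.prod_univ_sum (fun _ : Fin n => (Finset.univ : Finset 𝒳)) (fun _ a => p a)
    rw [Fintype.piFinset_univ] at h
    rw [← h]
    simp [hp1]
  have hle : ((Finset.univ.filter fun x : Fin n → 𝒳 => IsTypical p δ x).card : ℝ)
      * (2 : ℝ) ^ (-((n : ℝ) * (shannonEnt p + c * δ))) ≤ 1 := by
    rw [← htot, ← nsmul_eq_mul]
    refine (Finset.card_nsmul_le_sum _ (fun x => ∏ i, p (x i)) _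
      (fun x hx => key x (Finset.mem_filter.mp hx).2)).trans ?_
    exact Finset.sum_le_sum_of_subset_of_nonneg (Finset.filter_subset _ _)
      (fun x _ _ => Finset.prod_nonneg (fun i _ => hp0 _))
  rw [Real.rpow_neg (by norm_num), ← div_eq_mul_inv,
    div_le_one (Real.rpow_pos_of_pos (by norm_num) _)] at hle
  exact hle
end

section
/- Let 𝒳 be a finite set, p a pmf on 𝒳, and {ρ_x}_{x∈𝒳} a family of density matrices on ℂ^D; write ρ = Σ_{x∈𝒳} p(x)ρ_x and, for x^n ∈ 𝒳^n, ρ_{x^n} = ρ_{x_1} ⊗ ⋯ ⊗ ρ_{x_n}. Fix δ > 0 and reals 0 < d < D₀. Suppose that for every α > 0 and all sufficiently large n there exist an orthogonal projection Π and orthogonal projections Π_{x^n} for each x^n ∈ T_δ^{(n)}(p), all acting on the n-fold tensor power of ℂ^D, satisfying: Tr(Π ρ_{x^n}) ≥ 1 − α, Tr(Π_{x^n} ρ_{x^n}) ≥ 1 − α, Tr(Π_{x^n}) ≤ 2^{nd}, and Π ρ^{⊗n} Π ≼ 2^{−n(D₀ − α)} Π in the Loewner order, for every x^n ∈ T_δ^{(n)}(p).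 Then for every rate R < D₀ − d and every ε > 0, for all sufficiently large n there exist codewords x^n(m) ∈ T_δ^{(n)}(p), m ∈ {1,…,⌈2^{nR}⌉}, and positive semidefinite matrices Λ_m on the n-fold tensor power of ℂ^D with Σ_m Λ_m ≼ I, such that Tr(Λ_m ρ_{x^n(m)}) ≥ 1 − ε for every m. -/
open Finset
open scoped ComplexOrder

/-- The tensor-product state `ρ_{x^n} = ρ_{x_1} ⊗ ⋯ ⊗ ρ_{x_n}`, realized as a matrix on the
`n`-fold tensor power of `ℂ^D` (indexed by `Fin n → Fin D`). -/
def mTensor {D : ℕ} {𝒳 : Type} {n : ℕ} (ρ : 𝒳 → Matrix (Fin D) (Fin D) ℂ)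
    (x : Fin n → 𝒳) : Matrix (Fin n → Fin D) (Fin n → Fin D) ℂ :=
  Matrix.of fun a b => ∏ i, ρ (x i) (a i) (b i)

/-- The `n`-fold tensor power `σ^{⊗n}` of a matrix on `ℂ^D`. -/
def tPow {D : ℕ} (σ : Matrix (Fin D) (Fin D) ℂ) (n : ℕ) :
    Matrix (Fin n → Fin D) (Fin n → Fin D) ℂ :=
  Matrix.of fun a b => ∏ i, σ (a i) (b i)

/-- An orthogonal projection: a Hermitian idempotent matrix. -/
def IsProjection {m : Type} [Fintype m] (P : Matrix m m ℂ) : Prop :=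
  P.IsHermitian ∧ P * P = P

/-- The Loewner order `A ≼ B` on complex matrices: `B − A` is positive semidefinite. -/
def Loewner {m : Type} [Fintype m] (A B : Matrix m m ℂ) : Prop :=
  (B - A).PosSemidef

namespace QPack

set_option linter.unusedSectionVars false

variable {m : Type} [Fintype m] [DecidableEq m]

/-- The real part of the trace of a product. -/
noncomputable def rt (A : Matrix m m ℂ) : ℝ := (Matrix.trace A).re

open scoped MatrixOrder Matrix.Norms.L2Operator in
theorem psd_factor {A : Matrix m m ℂ} (hA : A.PosSemidef) :
    ∃ B : Matrix m m ℂ, A = B.conjTranspose * B :=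
  CStarAlgebra.nonneg_iff_eq_star_mul_self.mp hA.nonneg

theorem rt_mul_nonneg {A B : Matrix m m ℂ} (hA : A.PosSemidef) (hB : B.PosSemidef) :
    0 ≤ rt (A * B) := by
  obtain ⟨C, rfl⟩ := psd_factor hA
  have h : (C * B * C.conjTranspose).PosSemidef := hB.mul_mul_conjTranspose_same C
  have h2 : Matrix.trace (C.conjTranspose * C * B) = Matrix.trace (C * B * C.conjTranspose) := by
    rw [Matrix.trace_mul_comm (C * B), Matrix.mul_assoc]
  unfold rt
  rw [h2]
  exact (Complex.le_def.1 h.trace_nonneg).1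

theorem rt_add (A B : Matrix m m ℂ) : rt (A + B) = rt A + rt B := by
  simp [rt]

theorem rt_sub (A B : Matrix m m ℂ) : rt (A - B) = rt A - rt B := by
  simp [rt]

theorem rt_smul (t : ℝ) (A : Matrix m m ℂ) : rt ((t : ℂ) • A) = t * rt A := by
  simp [rt]

theorem rt_comm (A B : Matrix m m ℂ) : rt (A * B) = rt (B * A) := by
  simp [rt, Matrix.trace_mul_comm A B]

theorem rt_sum {ι : Type} (s : Finset ι) (f : ι → Matrix m m ℂ) :
    rt (∑ i ∈ s, f i) = ∑ i ∈ s, rt (f i) := by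
  simp [rt, Matrix.trace_sum]

theorem proj_psd {P : Matrix m m ℂ} (h : IsProjection P) : P.PosSemidef := by
  have := Matrix.posSemidef_conjTranspose_mul_self P
  rwa [h.1.eq, h.2] at this

theorem proj_compl {P : Matrix m m ℂ} (h : IsProjection P) : IsProjection (1 - P) := by
  refine ⟨Matrix.isHermitian_one.sub h.1, ?_⟩
  have := h.2
  simp [sub_mul, mul_sub, this]

theorem conj_psd {A B : Matrix m m ℂ} (hA : A.PosSemidef) (hB : B.IsHermitian) :
    (B * A * B).PosSemidef := by
  have := hA.mul_mul_conjTranspose_same B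
  rwa [hB.eq] at this

theorem sq_le {S : Matrix m m ℂ} (hS : S.PosSemidef) (hT : (1 - S).PosSemidef) :
    (S - S * S).PosSemidef := by
  have h := (conj_psd hT hS.1).add (conj_psd hS hT.1)
  convert h using 1
  noncomm_ring

/-- Success probability of the new decoding operator. -/
theorem gentle {S P r : Matrix m m ℂ} (hS : S.PosSemidef) (hT : (1 - S).PosSemidef)
    (hP : IsProjection P) (hr : r.PosSemidef) (t : ℝ) (ht : 0 < t) :
    (1 - t) * rt (P * r) - (1 / t) * rt (S * r) ≤ rt ((1 - S) * P * (1 - S) * r) := by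
  have hP' := proj_psd hP
  have e1 : rt ((1 - S) * P * (1 - S) * r) =
      rt (P * r) - rt (P * S * r) - rt (S * P * r) + rt (S * P * S * r) := by
    rw [← rt_sub, ← rt_sub, ← rt_add]
    congr 1
    noncomm_ring
  have hH : ((t : ℂ) • (1 : Matrix m m ℂ) - S).IsHermitian := by
    refine Matrix.IsHermitian.sub ?_ hS.1
    simp [Matrix.IsHermitian]
  have e2 := rt_mul_nonneg (conj_psd hP' hH) hr
  have e3 : rt (((t : ℂ) • (1 : Matrix m m ℂ) - S) * P * ((t : ℂ) • (1 : Matrix m m ℂ) - S) * r) =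
      t * (t * rt (P * r)) - t * rt (P * S * r) - t * rt (S * P * r) + rt (S * P * S * r) := by
    rw [← rt_smul, ← rt_smul, ← rt_smul, ← rt_smul, ← rt_sub, ← rt_sub, ← rt_add]
    congr 1
    simp only [sub_mul, mul_sub, Matrix.smul_mul, Matrix.mul_smul, one_mul, mul_one]
    abel
  have e4 : 0 ≤ rt (S * P * S * r) := rt_mul_nonneg (conj_psd hP' hS.1) hr
  have e5 : rt (S * P * S * r) ≤ rt (S * r) := by
    have h1 := rt_mul_nonneg (conj_psd (proj_psd (proj_compl hP)) hS.1) hr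
    have h2 := rt_mul_nonneg (sq_le hS hT) hr
    have h3 : rt (S * (1 - P) * S * r) = rt (S * S * r) - rt (S * P * S * r) := by
      rw [← rt_sub]; congr 1; noncomm_ring
    rw [sub_mul, rt_sub] at h2
    linarith
  rw [e1]
  rw [e3] at e2
  set a := rt (P * r)
  set b := rt (P * S * r)
  set c := rt (S * P * r)
  set q := rt (S * P * S * r)
  have e6 : b + c ≤ t * a + (1 / t) * q := by
    have : t * (b + c) ≤ t * (t * a + (1 / t) * q) := by
      have : t * (t * a + (1 / t) * q) = t * (t * a) + q := by field_simp
      rw [this]; linarith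
    exact le_of_mul_le_mul_left this ht
  have e7 : (1 / t) * q ≤ (1 / t) * rt (S * r) := by gcongr
  linarith

theorem pinch {S P r : Matrix m m ℂ} (hS : S.PosSemidef) (hT : (1 - S).PosSemidef)
    (hP : IsProjection P) (hr : r.PosSemidef) :
    rt (S * r) ≤ 2 * rt (P * S * P * r) + 2 * (rt r - rt (P * r)) := by
  have hQ := proj_compl hP
  set Q := 1 - P with hQd
  have e1 : rt (P * S * P * r) + rt (P * S * Q * r) + rt (Q * S * P * r) + rt (Q * S * Q * r)
      = rt (S * r) := by
    rw [← rt_add, ← rt_add, ← rt_add]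
    congr 1
    rw [hQd]
    noncomm_ring
  have e2 : 0 ≤ rt (P * S * P * r) - rt (P * S * Q * r) - rt (Q * S * P * r)
      + rt (Q * S * Q * r) := by
    have := rt_mul_nonneg (conj_psd hS (hP.1.sub hQ.1)) hr
    rw [← rt_sub, ← rt_sub, ← rt_add]
    convert this using 2
    noncomm_ring
  have e3 : rt (Q * S * Q * r) ≤ rt r - rt (P * r) := by
    have h1 := rt_mul_nonneg (conj_psd hT hQ.1) hr
    have h2 : rt (Q * (1 - S) * Q * r) = rt (Q * Q * r) - rt (Q * S * Q * r) := by
      rw [← rt_sub]; congr 1; noncomm_ring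
    have h3 : rt (Q * Q * r) = rt r - rt (P * r) := by
      rw [hQ.2, hQd, sub_mul, rt_sub, one_mul]
    linarith
  linarith

section tensor

variable {D : ℕ} {𝒳 : Type} {n : ℕ}

theorem mTensor_psd (ρ : 𝒳 → Matrix (Fin D) (Fin D) ℂ) (hρ : ∀ a, (ρ a).PosSemidef)
    (x : Fin n → 𝒳) : (mTensor ρ x).PosSemidef := by
  choose B hB using fun a => psd_factor (hρ a)
  have : mTensor ρ x = (mTensor B x).conjTranspose * mTensor B x := by
    ext a b
    simp only [mTensor, Matrix.of_apply, Matrix.mul_apply, Matrix.conjTranspose_apply, hB,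
      star_prod, ← Finset.prod_mul_distrib]
    rw [Finset.prod_univ_sum]
    simp
  rw [this]
  exact Matrix.posSemidef_conjTranspose_mul_self _

theorem mTensor_rt (ρ : 𝒳 → Matrix (Fin D) (Fin D) ℂ) (hρ : ∀ a, (ρ a).trace = 1)
    (x : Fin n → 𝒳) : rt (mTensor ρ x) = 1 := by
  have : Matrix.trace (mTensor ρ x) = ∏ i, (ρ (x i)).trace := by
    simp only [mTensor, Matrix.trace, Matrix.diag_apply, Matrix.of_apply]
    rw [Finset.prod_univ_sum]
    simp
  simp [rt, this, hρ]

theorem tPow_eq [Fintype 𝒳] [DecidableEq 𝒳] (p : 𝒳 → ℝ) (ρ : 𝒳 → Matrix (Fin D) (Fin D) ℂ) :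
    tPow (∑ a, (p a : ℂ) • ρ a) n = ∑ x : Fin n → 𝒳, ((∏ i, p (x i) : ℝ) : ℂ) • mTensor ρ x := by
  ext a b
  simp only [tPow, mTensor, Matrix.of_apply, Matrix.sum_apply, Matrix.smul_apply, smul_eq_mul,
    Complex.ofReal_prod, ← Finset.prod_mul_distrib]
  rw [Finset.prod_univ_sum]
  simp

end tensor

section lln

variable {𝒳 : Type} [Fintype 𝒳] [DecidableEq 𝒳]

theorem sum_prob (p : 𝒳 → ℝ) (hp1 : ∑ a, p a = 1) (n : ℕ) :
    ∑ x : Fin n → 𝒳, ∏ i, p (x i) = 1 := by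
  have := Finset.prod_univ_sum (fun _ : Fin n => (Finset.univ : Finset 𝒳)) (fun _ a => p a)
  simp only [hp1, Finset.prod_const_one, Fintype.piFinset_univ] at this
  exact this.symm

theorem sum_cons (n : ℕ) (F : (Fin (n + 1) → 𝒳) → ℝ) :
    ∑ x, F x = ∑ a : 𝒳, ∑ y : Fin n → 𝒳, F (Fin.cons a y) := by
  rw [← Fintype.sum_prod_type']
  exact (Fintype.sum_equiv (Fin.consEquiv (fun _ => 𝒳)) _ _ (fun _ => rfl)).symm

theorem mean_zero (p : 𝒳 → ℝ) (hp1 : ∑ a, p a = 1) (f : 𝒳 → ℝ) (hf : ∑ a, p a * f a = 0)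
    (n : ℕ) : ∑ x : Fin n → 𝒳, (∏ i, p (x i)) * (∑ i, f (x i)) = 0 := by
  induction n with
  | zero => simp
  | succ n ih =>
    rw [sum_cons]
    simp only [Fin.prod_univ_succ, Fin.sum_univ_succ, Fin.cons_zero, Fin.cons_succ]
    have : ∀ a : 𝒳, ∑ y : Fin n → 𝒳, (p a * ∏ i, p (y i)) * (f a + ∑ i, f (y i))
        = (p a * f a) * (∑ y : Fin n → 𝒳, ∏ i, p (y i))
          + p a * ∑ y : Fin n → 𝒳, (∏ i, p (y i)) * (∑ i, f (y i)) := by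
      intro a
      rw [Finset.mul_sum, Finset.mul_sum, ← Finset.sum_add_distrib]
      exact Finset.sum_congr rfl fun y _ => by ring
    simp only [this, ih, sum_prob p hp1, mul_zero, mul_one, add_zero, hf]

theorem variance_eq (p : 𝒳 → ℝ) (hp1 : ∑ a, p a = 1) (f : 𝒳 → ℝ) (hf : ∑ a, p a * f a = 0)
    (n : ℕ) : ∑ x : Fin n → 𝒳, (∏ i, p (x i)) * (∑ i, f (x i)) ^ 2
      = n * ∑ a, p a * f a ^ 2 := by
  induction n with
  | zero => simp
  | succ n ih =>
    rw [sum_cons]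
    simp only [Fin.prod_univ_succ, Fin.sum_univ_succ, Fin.cons_zero, Fin.cons_succ]
    have : ∀ a : 𝒳, ∑ y : Fin n → 𝒳, (p a * ∏ i, p (y i)) * (f a + ∑ i, f (y i)) ^ 2
        = (p a * f a ^ 2) * (∑ y : Fin n → 𝒳, ∏ i, p (y i))
          + 2 * (p a * f a) * (∑ y : Fin n → 𝒳, (∏ i, p (y i)) * (∑ i, f (y i)))
          + p a * ∑ y : Fin n → 𝒳, (∏ i, p (y i)) * (∑ i, f (y i)) ^ 2 := by
      intro a
      rw [Finset.mul_sum, Finset.mul_sum, Finset.mul_sum, ← Finset.sum_add_distrib,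
        ← Finset.sum_add_distrib]
      exact Finset.sum_congr rfl fun y _ => by ring
    simp only [this, ih, sum_prob p hp1, mean_zero p hp1 f hf, mul_zero, mul_one, add_zero]
    rw [Finset.sum_add_distrib, ← Finset.sum_mul, hp1]
    push_cast
    ring

theorem count_dev (p : 𝒳 → ℝ) (hp0 : ∀ a, 0 ≤ p a) (hp1 : ∑ a, p a = 1) (a : 𝒳) (n : ℕ) :
    ∑ x : Fin n → 𝒳, (∏ i, p (x i)) * ((count x a : ℝ) - n * p a) ^ 2 ≤ n := by
  have hf : ∑ b, p b * ((if b = a then (1 : ℝ) else 0) - p a) = 0 := by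
    simp [mul_sub, Finset.sum_sub_distrib, ← Finset.sum_mul, hp1]
  have h := variance_eq p hp1 (fun b => (if b = a then (1 : ℝ) else 0) - p a) hf n
  have hc : ∀ x : Fin n → 𝒳, ∑ i, ((if x i = a then (1 : ℝ) else 0) - p a)
      = (count x a : ℝ) - n * p a := by
    intro x
    simp [count, Finset.sum_sub_distrib]
  simp only [hc] at h
  rw [h]
  have hpa : p a ≤ 1 := by
    rw [← hp1]
    exact Finset.single_le_sum (fun b _ => hp0 b) (Finset.mem_univ a)
  have : ∑ b, p b * ((if b = a then (1 : ℝ) else 0) - p a) ^ 2 ≤ ∑ b, p b := by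
    refine Finset.sum_le_sum fun b _ => ?_
    refine mul_le_of_le_one_right (hp0 b) ?_
    have := hp0 a
    split_ifs <;> nlinarith
  rw [hp1] at this
  exact mul_le_of_le_one_right (Nat.cast_nonneg n) this

open Classical in
theorem typical_prob (p : 𝒳 → ℝ) (hp0 : ∀ a, 0 ≤ p a) (hp1 : ∑ a, p a = 1) (δ : ℝ) (hδ : 0 < δ)
    (n : ℕ) (hn0 : 0 < n) (hn : 2 * (Fintype.card 𝒳 : ℝ) ≤ n * δ ^ 2) :
    1 / 2 ≤ ∑ x : Fin n → 𝒳, if IsTypical p δ x then ∏ i, p (x i) else 0 := by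
  have hn0' : (0 : ℝ) < n := by exact_mod_cast hn0
  have key : ∀ x : Fin n → 𝒳, ∏ i, p (x i) ≤ (if IsTypical p δ x then ∏ i, p (x i) else 0)
      + ∑ a, (∏ i, p (x i)) * ((count x a : ℝ) - n * p a) ^ 2 / (n * δ) ^ 2 := by
    intro x
    have hpos : 0 ≤ ∏ i, p (x i) := Finset.prod_nonneg fun i _ => hp0 _
    have hterm : ∀ a, 0 ≤ (∏ i, p (x i)) * ((count x a : ℝ) - n * p a) ^ 2 / (n * δ) ^ 2 :=
      fun a => by positivity
    split_ifs with h
    · linarith [Finset.sum_nonneg fun a (_ : a ∈ Finset.univ) => hterm a]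
    · rw [zero_add]
      rcases hpos.eq_or_lt with h0 | h0
      · rw [← h0]; simp
      unfold IsTypical at h
      push Not at h
      obtain ⟨a, ha⟩ := h
      refine le_trans ?_ (Finset.single_le_sum (fun a _ => hterm a) (Finset.mem_univ a))
      by_cases hb : 0 < p a ∧ δ < |(count x a : ℝ) / n - p a|
      · have h2 : n * δ ≤ |(count x a : ℝ) - n * p a| := by
          have : (count x a : ℝ) - n * p a = n * ((count x a : ℝ) / n - p a) := by
            field_simp
          rw [this, abs_mul, abs_of_pos hn0']
          exact mul_le_mul_of_nonneg_left hb.2.le hn0'.le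
        have h3 : (n * δ) ^ 2 ≤ ((count x a : ℝ) - n * p a) ^ 2 := by
          rw [← sq_abs ((count x a : ℝ) - n * p a)]
          gcongr
        rw [le_div_iff₀ (by positivity)]
        gcongr
      · exfalso
        have hpa : p a = 0 ∧ count x a ≠ 0 := by
          apply ha
          intro h1
          by_contra h2
          exact hb ⟨h1, not_le.1 h2⟩
        have : ∃ i, x i = a := by
          have h5 := hpa.2
          unfold count at h5
          obtain ⟨i, hi⟩ := Finset.card_ne_zero.1 h5
          exact ⟨i, (Finset.mem_filter.1 hi).2⟩
        obtain ⟨i, hi⟩ := this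
        have : ∏ i, p (x i) = 0 := Finset.prod_eq_zero (Finset.mem_univ i) (by rw [hi, hpa.1])
        linarith
  have h1 := Finset.sum_le_sum fun x (_ : x ∈ (Finset.univ : Finset (Fin n → 𝒳))) => key x
  rw [sum_prob p hp1, Finset.sum_add_distrib, Finset.sum_comm] at h1
  have h2 : ∑ a : 𝒳, ∑ x : Fin n → 𝒳,
      (∏ i, p (x i)) * ((count x a : ℝ) - n * p a) ^ 2 / (n * δ) ^ 2 ≤ 1 / 2 := by
    calc _ ≤ ∑ a : 𝒳, (n : ℝ) / (n * δ) ^ 2 := by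
          refine Finset.sum_le_sum fun a _ => ?_
          rw [← Finset.sum_div]
          gcongr
          exact count_dev p hp0 hp1 a n
      _ = Fintype.card 𝒳 * ((n : ℝ) / (n * δ) ^ 2) := by simp
      _ ≤ 1 / 2 := by
          rw [mul_div_assoc', div_le_div_iff₀ (by positivity) (by norm_num)]
          nlinarith
  linarith

end lln

/-- One step of the greedy construction: an uncovered typical word exists. -/
theorem exists_uncovered {D : ℕ} {𝒳 : Type} [Fintype 𝒳] [DecidableEq 𝒳] {n : ℕ}
    (p : 𝒳 → ℝ) (hp0 : ∀ a, 0 ≤ p a)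
    (ρ : 𝒳 → Matrix (Fin D) (Fin D) ℂ)
    (hρ : ∀ a, (ρ a).PosSemidef ∧ (ρ a).trace = 1) (T : (Fin n → 𝒳) → Prop) [DecidablePred T]
    (hT : 1 / 2 ≤ ∑ x : Fin n → 𝒳, if T x then ∏ i, p (x i) else 0)
    (P S : Matrix (Fin n → Fin D) (Fin n → Fin D) ℂ) (hP : IsProjection P)
    (hS : S.PosSemidef) (hS1 : (1 - S).PosSemidef) (α η c : ℝ) (hαη : α ≤ η / 4)
    (hc : 0 ≤ c)
    (hPr : ∀ x, T x → 1 - α ≤ rt (P * mTensor ρ x))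
    (hL : Loewner (P * tPow (∑ a, (p a : ℂ) • ρ a) n * P) ((c : ℂ) • P))
    (hsmall : c * rt S < η / 8) : ∃ x, T x ∧ rt (S * mTensor ρ x) < η := by
  by_contra! hcon
  have h1 : ∀ x, T x → η / 4 ≤ rt (P * S * P * mTensor ρ x) := by
    intro x hx
    have h := pinch hS hS1 hP (mTensor_psd ρ (fun a => (hρ a).1) x)
    rw [mTensor_rt ρ (fun a => (hρ a).2)] at h
    linarith [hcon x hx, hPr x hx]
  have h2 : ∑ x : Fin n → 𝒳, (∏ i, p (x i)) * rt (P * S * P * mTensor ρ x)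
      = rt (S * (P * tPow (∑ a, (p a : ℂ) • ρ a) n * P)) := by
    rw [← Matrix.mul_assoc, rt_comm, ← Matrix.mul_assoc, ← Matrix.mul_assoc, tPow_eq,
      Matrix.mul_sum, rt_sum]
    refine Finset.sum_congr rfl fun x _ => ?_
    rw [Matrix.mul_smul, rt_smul]
  have h3 : rt (S * (P * tPow (∑ a, (p a : ℂ) • ρ a) n * P)) ≤ c * rt (S * P) := by
    have h := rt_mul_nonneg hS hL
    rw [mul_sub, rt_sub, Matrix.mul_smul, rt_smul] at h
    linarith
  have h4 : rt (S * P) ≤ rt S := by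
    have h := rt_mul_nonneg hS (proj_psd (proj_compl hP))
    rw [mul_sub, rt_sub, mul_one] at h
    linarith
  have h5 : (∑ x : Fin n → 𝒳, if T x then ∏ i, p (x i) else 0) * (η / 4)
      ≤ ∑ x : Fin n → 𝒳, (∏ i, p (x i)) * rt (P * S * P * mTensor ρ x) := by
    rw [Finset.sum_mul]
    refine Finset.sum_le_sum fun x _ => ?_
    have hpos : 0 ≤ ∏ i, p (x i) := Finset.prod_nonneg fun i _ => hp0 _
    split_ifs with h
    · exact mul_le_mul_of_nonneg_left (h1 x h) hpos
    · rw [zero_mul]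
      exact mul_nonneg hpos
        (rt_mul_nonneg (conj_psd hS hP.1) (mTensor_psd ρ (fun a => (hρ a).1) x))
  have hSn : 0 ≤ rt S := by
    have := rt_mul_nonneg hS Matrix.PosSemidef.one
    rwa [mul_one] at this
  have h6 : c * rt (S * P) ≤ c * rt S := mul_le_mul_of_nonneg_left h4 hc
  have hη : 0 < η := by nlinarith [mul_nonneg hc hSn]
  nlinarith

/-- The greedy construction. -/
theorem greedy {D : ℕ} {𝒳 : Type} [Fintype 𝒳] [DecidableEq 𝒳] {n : ℕ}
    (p : 𝒳 → ℝ) (hp0 : ∀ a, 0 ≤ p a)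
    (ρ : 𝒳 → Matrix (Fin D) (Fin D) ℂ)
    (hρ : ∀ a, (ρ a).PosSemidef ∧ (ρ a).trace = 1) (T : (Fin n → 𝒳) → Prop) [DecidablePred T]
    (hT : 1 / 2 ≤ ∑ x : Fin n → 𝒳, if T x then ∏ i, p (x i) else 0)
    (P : Matrix (Fin n → Fin D) (Fin n → Fin D) ℂ) (hP : IsProjection P)
    (Px : (Fin n → 𝒳) → Matrix (Fin n → Fin D) (Fin n → Fin D) ℂ)
    (hPx : ∀ x, T x → IsProjection (Px x))
    (α η c E t ε : ℝ) (hαη : α ≤ η / 4)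
    (hc : 0 ≤ c)
    (hPr : ∀ x, T x → 1 - α ≤ rt (P * mTensor ρ x))
    (hPxr : ∀ x, T x → 1 - α ≤ rt (Px x * mTensor ρ x))
    (hE : ∀ x, T x → rt (Px x) ≤ E)
    (hL : Loewner (P * tPow (∑ a, (p a : ℂ) • ρ a) n * P) ((c : ℂ) • P))
    (ht : 0 < t) (ht1 : t ≤ 1) (hε : 1 - ε ≤ (1 - t) * (1 - α) - (1 / t) * η)
    (K : ℕ) (hK : ∀ k < K, c * (k * E) < η / 8) (k : ℕ) (hk : k ≤ K) :
    ∃ (cw : Fin k → (Fin n → 𝒳)) (Λ : Fin k → Matrix (Fin n → Fin D) (Fin n → Fin D) ℂ),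
        (∀ m, T (cw m)) ∧
        (∀ m, (Λ m).PosSemidef) ∧
        ((1 - ∑ m, Λ m) : Matrix (Fin n → Fin D) (Fin n → Fin D) ℂ).PosSemidef ∧
        (∀ m, rt (Λ m) ≤ E) ∧
        (∀ m, 1 - ε ≤ rt (Λ m * mTensor ρ (cw m))) := by
  induction k with
  | zero =>
    refine ⟨fun i => i.elim0, fun i => i.elim0, fun i => i.elim0, fun i => i.elim0, ?_,
      fun i => i.elim0, fun i => i.elim0⟩
    simpa using Matrix.PosSemidef.one
  | succ k ih =>
    obtain ⟨cw, Λ, h1, h2, h3, h4, h5⟩ := ih (by omega)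
    have hS : (∑ m, Λ m).PosSemidef := Matrix.posSemidef_sum _ fun m _ => h2 m
    have hSE : rt (∑ m, Λ m) ≤ k * E := by
      rw [rt_sum]
      refine (Finset.sum_le_sum fun m _ => h4 m).trans ?_
      simp
    set S := ∑ m, Λ m with hSd
    obtain ⟨x, hx, hxS⟩ := exists_uncovered p hp0 ρ hρ T hT P S hP hS h3 α η c hαη hc hPr hL
      (lt_of_le_of_lt (mul_le_mul_of_nonneg_left hSE hc) (hK k (by omega)))
    have hQ := hPx x hx
    refine ⟨Fin.cons x cw, Fin.cons ((1 - S) * Px x * (1 - S)) Λ, ?_, ?_, ?_, ?_, ?_⟩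
    · intro m; refine Fin.cases ?_ ?_ m
      · exact hx
      · exact h1
    · intro m; refine Fin.cases ?_ ?_ m
      · exact conj_psd (proj_psd hQ) h3.1
      · exact h2
    · rw [Fin.sum_univ_succ]
      simp only [Fin.cons_zero, Fin.cons_succ]
      rw [← hSd]
      have ha := conj_psd (proj_psd (proj_compl hQ)) h3.1
      have hb := sq_le h3 (by simpa using hS)
      convert ha.add hb using 1
      noncomm_ring
    · intro m; refine Fin.cases ?_ ?_ m
      · simp only [Fin.cons_zero]
        refine le_trans ?_ (hE x hx)
        have hb := sq_le h3 (by simpa using hS)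
        have hb' := hb.add hS
        have hd := rt_mul_nonneg (proj_psd hQ) hb'
        have he : rt ((1 - S) * Px x * (1 - S)) = rt (Px x * ((1 - S) * (1 - S))) := by
          rw [Matrix.mul_assoc, rt_comm, Matrix.mul_assoc]
        rw [he]
        have hf : rt (Px x * (1 - S - (1 - S) * (1 - S) + S))
            = rt (Px x) - rt (Px x * ((1 - S) * (1 - S))) := by
          rw [← rt_sub]; congr 1; noncomm_ring
        linarith
      · exact h4
    · intro m; refine Fin.cases ?_ ?_ m
      · simp only [Fin.cons_zero]
        refine le_trans ?_ (gentle hS h3 hQ (mTensor_psd ρ (fun a => (hρ a).1) x) t ht)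
        refine hε.trans ?_
        have ha : (1 - t) * (1 - α) ≤ (1 - t) * rt (Px x * mTensor ρ x) :=
          mul_le_mul_of_nonneg_left (hPxr x hx) (by linarith)
        have hb : (1 / t) * rt (S * mTensor ρ x) ≤ (1 / t) * η := by gcongr
        linarith
      · exact h5

end QPack

/-- **Quantum packing lemma (asymptotic form).** Given an ensemble `{p(x), ρ_x}` of density
matrices on `ℂ^D` with average `ρ̄ = Σ_x p(x) ρ_x`, reals `0 < d < D₀` and `δ > 0`, suppose
that for every `α > 0` and all sufficiently large `n` there are a code projector `Π` and
codeword projectors `Π_{x^n}` for `x^n ∈ T_δ^{(n)}(p)` with `Tr(Π ρ_{x^n}) ≥ 1−α`,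
`Tr(Π_{x^n} ρ_{x^n}) ≥ 1−α`, `Tr(Π_{x^n}) ≤ 2^{nd}`, and `Π ρ̄^{⊗n} Π ≼ 2^{−n(D₀−α)} Π`.
Then for every rate `R < D₀ − d` and `ε > 0`, for all sufficiently large `n` there exist
codewords `x^n(m) ∈ T_δ^{(n)}(p)`, `m ∈ {1,…,⌈2^{nR}⌉}`, and a sub-POVM `{Λ_m}` with
`Tr(Λ_m ρ_{x^n(m)}) ≥ 1 − ε` for every `m`. -/
theorem quantum_packing_lemma {D : ℕ} {𝒳 : Type} [Fintype 𝒳] [DecidableEq 𝒳]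
    (p : 𝒳 → ℝ) (hp0 : ∀ a, 0 ≤ p a) (hp1 : ∑ a, p a = 1)
    (ρ : 𝒳 → Matrix (Fin D) (Fin D) ℂ)
    (hρ : ∀ a, (ρ a).PosSemidef ∧ (ρ a).trace = 1)
    (ρbar : Matrix (Fin D) (Fin D) ℂ) (hρbar : ρbar = ∑ a, (p a : ℂ) • ρ a)
    (δ : ℝ) (hδ : 0 < δ) (d D₀ : ℝ) (hd : 0 < d) (hdD : d < D₀)
    (hproj : ∀ α > (0 : ℝ), ∃ N : ℕ, ∀ n ≥ N,
      ∃ (Pi : Matrix (Fin n → Fin D) (Fin n → Fin D) ℂ)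
        (Pix : (Fin n → 𝒳) → Matrix (Fin n → Fin D) (Fin n → Fin D) ℂ),
        IsProjection Pi ∧
        (∀ x : Fin n → 𝒳, IsTypical p δ x →
          IsProjection (Pix x) ∧
          1 - α ≤ (Matrix.trace (Pi * mTensor ρ x)).re ∧
          1 - α ≤ (Matrix.trace (Pix x * mTensor ρ x)).re ∧
          (Matrix.trace (Pix x)).re ≤ (2 : ℝ) ^ ((n : ℝ) * d)) ∧
        Loewner (Pi * tPow ρbar n * Pi)
          ((((2 : ℝ) ^ (-(n : ℝ) * (D₀ - α)) : ℝ) : ℂ) • Pi)) :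
    ∀ R : ℝ, R < D₀ - d → ∀ ε > (0 : ℝ), ∃ N : ℕ, ∀ n ≥ N,
      ∃ (cw : Fin (Nat.ceil ((2 : ℝ) ^ ((n : ℝ) * R))) → (Fin n → 𝒳))
        (Λ : Fin (Nat.ceil ((2 : ℝ) ^ ((n : ℝ) * R))) →
          Matrix (Fin n → Fin D) (Fin n → Fin D) ℂ),
        (∀ m, IsTypical p δ (cw m)) ∧
        (∀ m, (Λ m).PosSemidef) ∧
        ((1 - ∑ m, Λ m) : Matrix (Fin n → Fin D) (Fin n → Fin D) ℂ).PosSemidef ∧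
        (∀ m, 1 - ε ≤ (Matrix.trace (Λ m * mTensor ρ (cw m))).re) := by
  classical
  intro R hR ε hε
  set t : ℝ := min ε 1 / 3 with htd
  have ht : 0 < t := by positivity
  have ht1 : t ≤ 1 / 3 := by
    have := min_le_right ε 1
    linarith
  have htε : 3 * t ≤ ε := by
    have := min_le_left ε 1
    linarith
  set α : ℝ := min (t ^ 2 / 4) ((D₀ - d - R) / 2) with hαd
  have hα : 0 < α := lt_min (by positivity) (by linarith)
  have hα1 : α ≤ t ^ 2 / 4 := min_le_left _ _
  have hα2 : α ≤ (D₀ - d - R) / 2 := min_le_right _ _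
  obtain ⟨N₁, hN₁⟩ := hproj α hα
  set γ : ℝ := D₀ - d - R - α with hγd
  have hγ : 0 < γ := by linarith
  obtain ⟨N₂, hN₂⟩ := exists_nat_ge (2 * (Fintype.card 𝒳 : ℝ) / δ ^ 2)
  have h2γ : 1 < (2 : ℝ) ^ γ := Real.one_lt_rpow (by norm_num) hγ
  obtain ⟨N₃, hN₃⟩ := pow_unbounded_of_one_lt (8 / t ^ 2) h2γ
  refine ⟨max (max N₁ 1) (max N₂ N₃), fun n hn => ?_⟩
  simp only [ge_iff_le, max_le_iff] at hn
  obtain ⟨⟨hn1, hn0⟩, hn2, hn3⟩ := hn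
  obtain ⟨Pi, Pix, hPi, hx, hL⟩ := hN₁ n hn1
  have hT := QPack.typical_prob p hp0 hp1 δ hδ n hn0 (by
    rw [div_le_iff₀ (by positivity)] at hN₂
    refine hN₂.trans ?_
    gcongr)
  rw [hρbar] at hL
  have hbig : 8 / t ^ 2 < (2 : ℝ) ^ ((n : ℝ) * γ) := by
    refine hN₃.trans_le ?_
    rw [mul_comm, Real.rpow_mul (by norm_num), Real.rpow_natCast]
    exact pow_le_pow_right₀ h2γ.le hn3
  obtain ⟨cw, Λ, h1, h2, h3, -, h5⟩ := QPack.greedy p hp0 ρ hρ (IsTypical p δ) hT Pi hPi Pix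
    (fun x h => (hx x h).1) α (t ^ 2) ((2 : ℝ) ^ (-(n : ℝ) * (D₀ - α))) ((2 : ℝ) ^ ((n : ℝ) * d))
    t ε hα1 (by positivity) (fun x h => (hx x h).2.1) (fun x h => (hx x h).2.2.1)
    (fun x h => (hx x h).2.2.2) hL ht (by linarith)
    (by
      have : (1 / t) * t ^ 2 = t := by field_simp
      rw [this]
      nlinarith)
    (Nat.ceil ((2 : ℝ) ^ ((n : ℝ) * R)))
    (by
      intro k hk
      have hk' : (k : ℝ) < (2 : ℝ) ^ ((n : ℝ) * R) := Nat.lt_ceil.1 hk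
      have e : (2 : ℝ) ^ (-(n : ℝ) * (D₀ - α)) * ((2 : ℝ) ^ ((n : ℝ) * R) * (2 : ℝ) ^ ((n : ℝ) * d))
          = ((2 : ℝ) ^ ((n : ℝ) * γ))⁻¹ := by
        rw [← Real.rpow_add (by norm_num), ← Real.rpow_add (by norm_num),
          ← Real.rpow_neg (by norm_num)]
        congr 1
        rw [hγd]; ring
      calc _ < (2 : ℝ) ^ (-(n : ℝ) * (D₀ - α)) *
            ((2 : ℝ) ^ ((n : ℝ) * R) * (2 : ℝ) ^ ((n : ℝ) * d)) := by gcongr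
        _ = ((2 : ℝ) ^ ((n : ℝ) * γ))⁻¹ := e
        _ ≤ (8 / t ^ 2)⁻¹ := inv_anti₀ (by positivity) hbig.le
        _ = t ^ 2 / 8 := by rw [inv_div])
    _ le_rfl
  exact ⟨cw, Λ, h1, h2, h3, h5⟩
end
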